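/- arXiv:2310.13879 — 4 statements merged into one kernel-verified Lean document; each statement's English description precedes it below -/
import Mathlib

section
/- Let X be an involutive BE algebra. For all x, y, z ∈ X, if x ≤_Q z, y ≤_Q z and z→x = z→y, then x = y (cancellation law). -/
/-- An involutive BE algebra `(X, →, 0, 1)`. -/
structure InvBE (X : Type*) where
  imp : X → X → X
  one : X
  zero : X
  imp_self : ∀ x, imp x x = one
  imp_one : ∀ x, imp x one = one
  one_imp : ∀ x, imp one x = x
  exchange : ∀ x y z, imp x (imp y z) = imp y (imp x z)
  zero_imp : ∀ x, imp zero x = one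
  imp_involutive : ∀ x, imp (imp x zero) zero = x

namespace InvBE

variable {X : Type*} (A : InvBE X)

/-- `x* := x → 0`. -/
def neg (x : X) : X := A.imp x A.zero

/-- `x ⊓ y := ((x* → y*) → y*)*`. -/
def inf (x y : X) : X := A.neg (A.imp (A.imp (A.neg x) (A.neg y)) (A.neg y))

/-- `x ∪ y := (x → y) → y`. -/
def sup (x y : X) : X := A.imp (A.imp x y) y

/-- `x ⊙ y := (x → y*)*`. -/
def odot (x y : X) : X := A.neg (A.imp x (A.neg y))

/-- `x ⊕ y := (x* ⊙ y*)*`. -/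
def oplus (x y : X) : X := A.neg (A.odot (A.neg x) (A.neg y))

/-- `x ≤_Q y` iff `x = x ⊓ y`. -/
def leQ (x y : X) : Prop := x = A.inf x y

/-- `x ≤ y` iff `x → y = 1`. -/
def le (x y : X) : Prop := A.imp x y = A.one

/-- (IOM): `x ⊓ (y → x) = x` for all `x, y`. -/
def IOM : Prop := ∀ x y, A.inf x (A.imp y x) = x

/-- (QW): `x → ((x ⊓ y) ⊓ (z ⊓ x)) = (x → y) ⊓ (x → z)` for all `x, y, z`. -/
def QW : Prop :=
  ∀ x y z, A.imp x (A.inf (A.inf x y) (A.inf z x)) = A.inf (A.imp x y) (A.imp x z)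

/-- A filter: nonempty, closed under `⊙`, upward closed for `≤_Q`. -/
def IsFilter (F : Set X) : Prop :=
  F.Nonempty ∧ (∀ x ∈ F, ∀ y ∈ F, A.odot x y ∈ F) ∧
    (∀ x ∈ F, ∀ y : X, A.leQ x y → y ∈ F)

/-- A deductive system: contains `1` and is closed under modus ponens. -/
def IsDS (F : Set X) : Prop :=
  A.one ∈ F ∧ ∀ x y : X, x ∈ F → A.imp x y ∈ F → y ∈ F

/-- `pow x n` is the `⊙`-product of `n + 1` copies of `x`, i.e. `x^(n+1)`. -/
def pow (x : X) : ℕ → X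
  | 0 => x
  | n + 1 => A.odot x (pow x n)

/-- A maximal filter: proper and not contained in any other proper filter. -/
def IsMaximalFilter (F : Set X) : Prop :=
  A.IsFilter F ∧ F ≠ Set.univ ∧
    ∀ G : Set X, A.IsFilter G → F ⊆ G → G ≠ Set.univ → G = F

/-- A strongly maximal filter: for every `x ∉ F` there is `n ≥ 1` with `(xⁿ)* ∈ F`. -/
def IsStronglyMaximalFilter (F : Set X) : Prop :=
  A.IsFilter F ∧ ∀ x : X, x ∉ F → ∃ n : ℕ, A.neg (A.pow x n) ∈ F

/-- `x ≡_F y` iff there is `f` with `x, y ≤_Q f` and `f → x, f → y ∈ F`. -/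
def cong (F : Set X) (x y : X) : Prop :=
  ∃ f : X, A.leQ x f ∧ A.leQ y f ∧ A.imp f x ∈ F ∧ A.imp f y ∈ F

end InvBE

/-- Contraposition `x* → z* = z → x`: the involution makes `⊓` with `z` depend only on `z → x`. -/
theorem InvBE.neg_imp_neg {X : Type*} (A : InvBE X) (x z : X) :
    A.imp (A.neg x) (A.neg z) = A.imp z x := by
  unfold InvBE.neg
  rw [A.exchange, A.imp_involutive]

/-- Cancellation law: if `x ≤_Q z`, `y ≤_Q z` and `z → x = z → y`, then `x = y`. -/
theorem stmt_0 {X : Type*} (A : InvBE X) :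
    ∀ x y z : X, A.leQ x z → A.leQ y z → A.imp z x = A.imp z y → x = y := by
  intro x y z hx hy h
  -- By contraposition, `x = ((z → x) → z*)*`, and likewise for `y`.
  unfold InvBE.leQ InvBE.inf at hx hy
  rw [A.neg_imp_neg x z] at hx
  rw [A.neg_imp_neg y z] at hy
  exact hx.trans ((congrArg (fun t => A.neg (A.imp t (A.neg z))) h).trans hy.symm)
end

section
/- Let X be an involutive BE algebra. For all x, y ∈ X, (x ∪ y) ⊓ y = y and (x ⊓ y) ∪ y = y. -/
namespace InvBE

theorem neg_neg {X : Type*} (A : InvBE X) (x : X) : A.neg (A.neg x) = x :=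
  A.imp_involutive x

/-- Contraposition: by exchange, `x* → y* = y → x**`. -/
theorem neg_imp_neg_s1 {X : Type*} (A : InvBE X) (x y : X) :
    A.imp (A.neg x) (A.neg y) = A.imp y x := by
  unfold neg
  rw [A.exchange, A.imp_involutive]

/-- Every implication with consequent `y` lies above `y`. -/
theorem imp_imp_self {X : Type*} (A : InvBE X) (y z : X) :
    A.imp y (A.imp z y) = A.one := by
  rw [A.exchange, A.imp_self, A.imp_one]

end InvBE

/-- `(x ∪ y) ⊓ y = y` and `(x ⊓ y) ∪ y = y`. -/
theorem stmt_1 {X : Type*} (A : InvBE X) :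
    ∀ x y : X, A.inf (A.sup x y) y = y ∧ A.sup (A.inf x y) y = y := by
  intro x y
  constructor
  · -- By contraposition the inner implication is `y → (x ∪ y)`, which is `1`.
    unfold InvBE.inf InvBE.sup
    rw [A.neg_imp_neg_s1, A.imp_imp_self, A.one_imp, A.neg_neg]
  · -- `(x ⊓ y) → y` is the contrapositive of `y* → ((x* → y*) → y*)`, so it is `1`.
    have h : A.imp (A.inf x y) y = A.one := by
      rw [← A.neg_imp_neg_s1, InvBE.inf, A.neg_neg, A.imp_imp_self]
    rw [InvBE.sup, h, A.one_imp]
end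

section
/- Let X be an implicative-orthomodular algebra. For all x, y ∈ X, (x→y)→(y ⊓ x) = x. -/
/-- In an IOM algebra, `(x → y) → (y ⊓ x) = x`. -/
theorem stmt_5 {X : Type*} (A : InvBE X) (hA : A.IOM) :
    ∀ x y : X, A.imp (A.imp x y) (A.inf y x) = x := by
  intro x y
  have inv : ∀ u, A.neg (A.neg u) = u := A.imp_involutive
  have swap : ∀ u v, A.imp u (A.neg v) = A.imp v (A.neg u) := fun u v => A.exchange u v A.zero
  have contra : ∀ u v, A.imp (A.neg u) (A.neg v) = A.imp v u := fun u v => by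
    rw [swap, inv]
  have h := hA (A.neg x) (A.neg y)
  unfold InvBE.inf at h ⊢
  rw [contra y x, inv] at h
  rw [contra y x, swap (A.imp x y) (A.imp _ _), swap (A.imp x y) x, ← inv (A.imp (A.imp _ _) _),
    h, inv]
end

section
/- Let X be an implicative-orthomodular algebra. For all x, y ∈ X, x ∪ (y ⊓ x) = x and x ⊓ (y ∪ x) = x (absorption laws). -/
/-- Absorption laws in an IOM algebra: `x ∪ (y ⊓ x) = x` and `x ⊓ (y ∪ x) = x`. -/
theorem stmt_9 {X : Type*} (A : InvBE X) (hA : A.IOM) :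
    ∀ x y : X, A.sup x (A.inf y x) = x ∧ A.inf x (A.sup y x) = x := by
  intro x y
  -- The second law is (IOM) at `y → x`, since `y ∪ x = (y → x) → x`.
  refine ⟨?_, hA x (A.imp y x)⟩
  have negNeg : ∀ z, A.neg (A.neg z) = z := A.imp_involutive
  -- The first law is the De Morgan dual of the second: `x* ⊓ (y* ∪ x*) = x*` unfolds to
  -- `(x** ∪ (y ⊓ x))* = x*`, because `(y* ∪ x*)* = y ⊓ x` by definition.
  have h : A.neg (A.sup (A.neg (A.neg x)) (A.inf y x)) = A.neg x :=
    hA (A.neg x) (A.imp (A.neg y) (A.neg x))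
  have h' := congrArg A.neg h
  rwa [negNeg, negNeg] at h'
end
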